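/- Let b ≥ 2 be an integer base and let A ⊆ [0,1) be a half-open interval. If A ≠ [0,1), let r ≥ 1 be the smallest positive integer for which A can be written as A = [h·b^{1−r} + g·b^{−r} − z, h·b^{1−r} + G·b^{−r} + Z) with an integer h ≥ 0, integers 1 ≤ g ≤ G ≤ b−1, and reals z, Z ∈ [0, b^{−r}); if A = [0,1), let r = 1. Then there exist nonnegative real sequences (α_k)_{k≥0} and (τ_k)_{k≥0} such that Σ_{k≥0} (α_k + τ_k) = Vol(A × A) (the square of the length of A), and for every i ∈ ℕ: V_i(A × A) = Σ_{k≥0} α_k · (b^{2(k+r+1)}/4) · V_i(Y_k^{(r−1)} × Y_k^{(r−1)}) + Σ_{k≥0} τ_k · b^{2k} · V_i(1_k × 1_k). -/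

import Mathlib

open MeasureTheory

/-- `γ_b(x,y)`: the exact number of initial common base-`b` digits of `x, y ∈ [0,1)`,
i.e. the unique `i ≥ 0` with `⌊b^i x⌋ = ⌊b^i y⌋` but `⌊b^{i+1} x⌋ ≠ ⌊b^{i+1} y⌋`
when `x ≠ y`, and `∞` when `x = y`. -/
noncomputable def gammaB (b : ℕ) (x y : ℝ) : ℕ∞ :=
  if x = y then ⊤
  else ((sInf {i : ℕ | ⌊(b : ℝ) ^ i * x⌋ = ⌊(b : ℝ) ^ i * y⌋ ∧
      ⌊(b : ℝ) ^ (i + 1) * x⌋ ≠ ⌊(b : ℝ) ^ (i + 1) * y⌋} : ℕ) : ℕ∞)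

/-- `V_i(A × B)`: the 2-dimensional Lebesgue measure of
`{(x,y) ∈ A × B : x ≠ y, γ_b(x,y) = i}`. -/
noncomputable def Vvec (b : ℕ) (A B : Set ℝ) (i : ℕ) : ℝ :=
  (volume {p : ℝ × ℝ | p.1 ∈ A ∧ p.2 ∈ B ∧ p.1 ≠ p.2 ∧ gammaB b p.1 p.2 = (i : ℕ∞)}).toReal

/-- `A` admits the representation
`A = [h·b^{1−r} + g·b^{−r} − z, h·b^{1−r} + G·b^{−r} + Z)` with an integer `h ≥ 0`,
integers `1 ≤ g ≤ G ≤ b−1`, and reals `z, Z ∈ [0, b^{−r})`. -/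
def IsRep (b : ℕ) (A : Set ℝ) (r : ℕ) : Prop :=
  ∃ (h g G : ℕ) (z Z : ℝ), 1 ≤ g ∧ g ≤ G ∧ G + 1 ≤ b ∧
    0 ≤ z ∧ z < (b : ℝ) ^ (-(r : ℤ)) ∧ 0 ≤ Z ∧ Z < (b : ℝ) ^ (-(r : ℤ)) ∧
    A = Set.Ico ((h : ℝ) * (b : ℝ) ^ (1 - (r : ℤ)) + (g : ℝ) * (b : ℝ) ^ (-(r : ℤ)) - z)
                ((h : ℝ) * (b : ℝ) ^ (1 - (r : ℤ)) + (G : ℝ) * (b : ℝ) ^ (-(r : ℤ)) + Z)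

/-- The elementary (anchored) `k`-interval `1_k = [0, b^{−k})`. -/
def oneK (b k : ℕ) : Set ℝ := Set.Ico 0 ((b : ℝ) ^ (-(k : ℤ)))

/-- The elementary unanchored `(d,k)`-interval
`Y_k^{(d)} = [b^{−(d+1)} − b^{−(2+k+d)}, b^{−(d+1)} + b^{−(2+k+d)})`. -/
def Yint (b k d : ℕ) : Set ℝ :=
  Set.Ico ((b : ℝ) ^ (-((d : ℤ) + 1)) - (b : ℝ) ^ (-((2 : ℤ) + k + d)))
          ((b : ℝ) ^ (-((d : ℤ) + 1)) + (b : ℝ) ^ (-((2 : ℤ) + k + d)))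

/-!
Let `M i` be the area of the set of pairs in `A × A` lying in a common cell of width `b⁻ⁱ`, so that
`V_i(A × A) = M i - M (i + 1)`. Once `A` contains a grid point (from level `r` on), `M i` is
`|A| b⁻ⁱ` minus `b⁻²ⁱ` times a periodic parabola evaluated at the rescaled endpoints. Up to
normalization `V(1_k × 1_k)` is a geometric sequence starting at `k`, and `V(Y_k × Y_k)` is the mean
of such a sequence and a unit mass at `r - 1`. The coefficients of `V(A × A)` with respect to the
geometric sequences are nonnegative, by an inequality for the parabola at three consecutive scales,
except possibly the coefficient at `r`: the mass of `V(A × A)` at `r - 1` may be too large. Part of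
this mass is absorbed by replacing a proportion of the geometric sequences starting after `r` with
vectors `V(Y_k × Y_k)`; that they suffice is a quadratic inequality for the length of `A`.
-/

/-- The `1`-periodic function equal to `x (1 - x)` on `[0, 1]`. It measures how far the pairs
sharing a grid cell fall short of the linear growth, at an endpoint cutting a cell at `x`. -/
noncomputable def fractParabola (x : ℝ) : ℝ := Int.fract x * (1 - Int.fract x)

section FractParabola

lemma fractParabola_nonneg (x : ℝ) : 0 ≤ fractParabola x :=
  mul_nonneg (Int.fract_nonneg x) (sub_nonneg.2 (Int.fract_lt_one x).le)

lemma fractParabola_zero : fractParabola 0 = 0 := by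
  rw [fractParabola, Int.fract_zero, zero_mul]

lemma fractParabola_intCast_add (m : ℤ) (x : ℝ) : fractParabola (m + x) = fractParabola x := by
  simp only [fractParabola, Int.fract_intCast_add]

lemma sub_mul_sub_le_fractParabola (x : ℝ) (n : ℤ) : (x - n) * (n + 1 - x) ≤ fractParabola x := by
  have key : 0 ≤ (⌊x⌋ - n : ℝ) * (⌊x⌋ - n + 1 - 2 * (1 - Int.fract x)) := by
    have h0 := Int.fract_nonneg x
    have h1 := Int.fract_lt_one x
    rcases lt_trichotomy ⌊x⌋ n with h | h | h
    · have : (⌊x⌋ : ℝ) + 1 ≤ n := by exact_mod_cast h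
      exact mul_nonneg_of_nonpos_of_nonpos (by linarith) (by linarith)
    · simp [h]
    · have : (n : ℝ) + 1 ≤ ⌊x⌋ := by exact_mod_cast h
      exact mul_nonneg (by linarith) (by linarith)
  calc (x - n) * (n + 1 - x) = (⌊x⌋ + Int.fract x - n) * (n + 1 - (⌊x⌋ + Int.fract x)) := by
        rw [Int.floor_add_fract]
    _ ≤ Int.fract x * (1 - Int.fract x) := by linear_combination key

lemma fractParabola_neg (x : ℝ) : fractParabola (-x) = fractParabola x := by
  have le_neg (y : ℝ) : fractParabola y ≤ fractParabola (-y) := by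
    convert sub_mul_sub_le_fractParabola (-y) (-⌊y⌋ - 1) using 1
    simp only [fractParabola, ← Int.self_sub_floor]
    push_cast
    ring
  exact le_antisymm (by simpa only [neg_neg] using le_neg (-x)) (le_neg x)

lemma fractParabola_intCast_sub (m : ℤ) (x : ℝ) : fractParabola (m - x) = fractParabola x := by
  rw [sub_eq_add_neg, fractParabola_intCast_add, fractParabola_neg]

lemma fractParabola_of_mem_Icc {x : ℝ} (hx : x ∈ Set.Icc (0 : ℝ) 1) :
    fractParabola x = x * (1 - x) := by
  rcases hx.2.eq_or_lt with rfl | h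
  · simp [fractParabola]
  · rw [fractParabola, Int.fract_eq_self.2 ⟨hx.1, h⟩]

/-- The digit of `x` following its integer part is either at most `b - 2`, and `v` is the fractional
part of `b x`, or equal to `b - 1`, and `v` is the complement of that fractional part. -/
lemma exists_mul_sub_le_sq_mul_fractParabola {b : ℕ} (hb : 0 < b) (x : ℝ) :
    ∃ v : ℝ, fractParabola (b * x) = v * (1 - v) ∧
      fractParabola (b * (b * x)) = fractParabola (b * v) ∧
      v * (b - v) ≤ b ^ 2 * fractParabola x := by
  set u := Int.fract x with hu
  set D := ⌊(b : ℝ) * u⌋ with hD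
  set t := Int.fract ((b : ℝ) * u)
  have hDt : (b : ℝ) * u = D + t := (Int.floor_add_fract _).symm
  have hx : (b : ℝ) * x = ((b * ⌊x⌋ + D : ℤ) : ℝ) + t := by
    push_cast
    linear_combination -(b : ℝ) * Int.floor_add_fract x + hDt
  have hsq : (b : ℝ) ^ 2 * fractParabola x = (D + t) * (b - (D + t)) := by
    rw [fractParabola, ← hu, ← hDt]
    ring
  have hbx : fractParabola (b * x) = t * (1 - t) := by
    rw [hx, fractParabola_intCast_add,
      fractParabola_of_mem_Icc ⟨Int.fract_nonneg _, (Int.fract_lt_one _).le⟩]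
  have hbbx : fractParabola (b * (b * x)) = fractParabola (b * t) := by
    rw [hx, mul_add, ← fractParabola_intCast_add (b * (b * ⌊x⌋ + D)) (b * t)]
    push_cast
    rfl
  have ht1 : t < 1 := Int.fract_lt_one _
  have hD0 : 0 ≤ D := Int.floor_nonneg.2 (mul_nonneg b.cast_nonneg (Int.fract_nonneg x))
  have hDb : D < b := by
    rw [hD, Int.floor_lt, Int.cast_natCast]
    exact mul_lt_of_lt_one_right (by exact_mod_cast hb) (Int.fract_lt_one x)
  rcases (show D + 2 ≤ b ∨ D + 1 = b by omega) with h | h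
  · have h' : (D : ℝ) + 2 ≤ b := by exact_mod_cast h
    have hD0' : (0 : ℝ) ≤ D := by exact_mod_cast hD0
    refine ⟨t, hbx, hbbx, ?_⟩
    rw [hsq]
    linear_combination mul_nonneg hD0' (show (0 : ℝ) ≤ b - D - 2 * t by linarith)
  · have h' : (b : ℝ) = D + 1 := by exact_mod_cast h.symm
    refine ⟨1 - t, by rw [hbx]; ring, ?_, ?_⟩
    · rw [hbbx, mul_one_sub, ← fractParabola_intCast_sub b (b * t), Int.cast_natCast]
    · rw [hsq, h']
      linarith

lemma sq_add_mul_fractParabola_le {b : ℕ} (hb : 0 < b) (x : ℝ) :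
    (b ^ 2 + b) * fractParabola (b * x) ≤
      b ^ 3 * fractParabola x + fractParabola (b * (b * x)) := by
  obtain ⟨v, hbx, hbbx, hx⟩ := exists_mul_sub_le_sq_mul_fractParabola hb x
  have hv := sub_mul_sub_le_fractParabola (b * v) 0
  rw [hbx, hbbx]
  push_cast at hv
  linear_combination (b : ℝ) * hx + hv

lemma mul_le_sub_mul_fractParabola {b n : ℕ} (hn : n + 2 ≤ b) {x : ℝ}
    (hx : x ∈ Set.Icc (0 : ℝ) 1) :
    (b - 1) * b * (x * (2 * x - b) + n * (2 * x - 1)) ≤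
      (b - 2) * fractParabola (b * x) - (b ^ 2 - 2) * b * fractParabola x := by
  have hn' : (n : ℝ) + 2 ≤ b := by exact_mod_cast hn
  have near_zero := sub_mul_sub_le_fractParabola (b * x) 0
  have near_one := sub_mul_sub_le_fractParabola (b * x) (b - 1)
  push_cast at near_zero near_one
  rw [fractParabola_of_mem_Icc hx]
  linear_combination (n : ℝ) * near_one + mul_le_mul_of_nonneg_left near_zero
    (show (0 : ℝ) ≤ b - 2 - n by linarith)

lemma length_mul_sub_le {b n : ℕ} (hn : n + 2 ≤ b) {s t : ℝ}
    (hs : s ∈ Set.Icc (0 : ℝ) 1) (ht : t ∈ Set.Icc (0 : ℝ) 1) :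
    (b - 1) * b * ((s + n + t) * (s + n + t - b)) ≤
      (b - 2) * (fractParabola (b * s) + fractParabola (b * t)) -
        (b ^ 2 - 2) * b * (fractParabola s + fractParabola t) := by
  have hn' : (n : ℝ) + 2 ≤ b := by exact_mod_cast hn
  have hn0 : (0 : ℝ) ≤ n := n.cast_nonneg
  have hbb : (0 : ℝ) ≤ (b - 1) * b := mul_nonneg (by linarith) b.cast_nonneg
  have hgap : (0 : ℝ) ≤ (s - t) ^ 2 + n * (b - 2 - n) :=
    add_nonneg (sq_nonneg _) (mul_nonneg hn0 (by linarith))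
  linear_combination mul_le_sub_mul_fractParabola hn hs + mul_le_sub_mul_fractParabola hn ht +
    mul_nonneg hbb hgap

end FractParabola

section SameCell

/-- The pairs of points of `A` lying in a common cell `[m / N, (m + 1) / N)`, `m ∈ ℤ`. -/
def sameCellPairs (N : ℝ) (A : Set ℝ) : Set (ℝ × ℝ) :=
  {p ∈ A ×ˢ A | ⌊N * p.1⌋ = ⌊N * p.2⌋}

/-- The area of the set of pairs of points of `A` in a common cell of width `1 / N`; the volume
vector of `A × A` is the difference sequence of `i ↦ sameCellVol (b ^ i) A`. -/
noncomputable def sameCellVol (N : ℝ) (A : Set ℝ) : ℝ :=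
  volume.real (sameCellPairs N A)

lemma measurableSet_sameCellPairs (N : ℝ) {A : Set ℝ} (hA : MeasurableSet A) :
    MeasurableSet (sameCellPairs N A) :=
  (hA.prod hA).inter <| measurableSet_eq_fun
    (Int.measurable_floor.comp (measurable_fst.const_mul N))
    (Int.measurable_floor.comp (measurable_snd.const_mul N))

lemma volume_sameCellPairs_ne_top (N : ℝ) {A : Set ℝ} (hA : volume A ≠ ⊤) :
    volume (sameCellPairs N A) ≠ ⊤ := by
  refine measure_ne_top_of_subset (Set.sep_subset _ _) ?_
  rw [Measure.volume_eq_prod, Measure.prod_prod]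
  exact ENNReal.mul_ne_top hA hA

lemma sameCellVol_union {N : ℝ} {A B : Set ℝ} (hB : MeasurableSet B)
    (hA_fin : volume A ≠ ⊤) (hB_fin : volume B ≠ ⊤)
    (hsep : ∀ x ∈ A, ∀ y ∈ B, ⌊N * x⌋ ≠ ⌊N * y⌋) :
    sameCellVol N (A ∪ B) = sameCellVol N A + sameCellVol N B := by
  have hunion : sameCellPairs N (A ∪ B) = sameCellPairs N A ∪ sameCellPairs N B := by
    ext ⟨x, y⟩
    constructor
    · rintro ⟨⟨hx | hx, hy | hy⟩, hxy⟩
      · exact Or.inl ⟨⟨hx, hy⟩, hxy⟩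
      · exact absurd hxy (hsep x hx y hy)
      · exact absurd hxy.symm (hsep y hy x hx)
      · exact Or.inr ⟨⟨hx, hy⟩, hxy⟩
    · rintro (⟨⟨hx, hy⟩, hxy⟩ | ⟨⟨hx, hy⟩, hxy⟩)
      · exact ⟨⟨Or.inl hx, Or.inl hy⟩, hxy⟩
      · exact ⟨⟨Or.inr hx, Or.inr hy⟩, hxy⟩
  have hdisj : Disjoint (sameCellPairs N A) (sameCellPairs N B) :=
    Set.disjoint_left.2 fun p hpA hpB => hsep p.1 hpA.1.1 p.1 hpB.1.1 rfl
  rw [sameCellVol, hunion, measureReal_union hdisj (measurableSet_sameCellPairs N hB)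
    (volume_sameCellPairs_ne_top N hA_fin) (volume_sameCellPairs_ne_top N hB_fin)]
  rfl

lemma sameCellVol_eq_sq {N : ℝ} {A : Set ℝ} (h : ∀ x ∈ A, ∀ y ∈ A, ⌊N * x⌋ = ⌊N * y⌋) :
    sameCellVol N A = volume.real A ^ 2 := by
  have : sameCellPairs N A = A ×ˢ A :=
    Set.sep_eq_self_iff_mem_true.2 fun p hp => h p.1 hp.1 p.2 hp.2
  rw [sameCellVol, this, Measure.volume_eq_prod, measureReal_prod_prod, sq]

variable {N a c : ℝ}

lemma floor_mul_eq_of_mem_Ico (hN : 0 < N) {m : ℤ} (ha : m ≤ N * a) (hc : N * c ≤ m + 1) {x : ℝ}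
    (hx : x ∈ Set.Ico a c) : ⌊N * x⌋ = m :=
  Int.floor_eq_iff.2 ⟨ha.trans (mul_le_mul_of_nonneg_left hx.1 hN.le),
    (mul_lt_mul_of_pos_left hx.2 hN).trans_le hc⟩

lemma sameCellVol_Ico_of_subset_cell (hN : 0 < N) (hac : a ≤ c) {m : ℤ} (ha : m ≤ N * a)
    (hc : N * c ≤ m + 1) : sameCellVol N (Set.Ico a c) = (c - a) ^ 2 := by
  rw [sameCellVol_eq_sq fun x hx y hy => by
    rw [floor_mul_eq_of_mem_Ico hN ha hc hx, floor_mul_eq_of_mem_Ico hN ha hc hy],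
    Real.volume_real_Ico_of_le hac]

lemma sameCellVol_Ico_split (hN : 0 < N) {p : ℝ} {m : ℤ} (hp : N * p = m) (hap : a ≤ p)
    (hpc : p ≤ c) : sameCellVol N (Set.Ico a c) =
      sameCellVol N (Set.Ico a p) + sameCellVol N (Set.Ico p c) := by
  rw [← Set.Ico_union_Ico_eq_Ico hap hpc]
  refine sameCellVol_union measurableSet_Ico measure_Ico_lt_top.ne measure_Ico_lt_top.ne
    fun x hx y hy => ne_of_lt (lt_of_lt_of_le (b := m) ?_ ?_)
  · rw [Int.floor_lt, ← hp]
    exact mul_lt_mul_of_pos_left hx.2 hN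
  · rw [Int.le_floor, ← hp]
    exact mul_le_mul_of_nonneg_left hy.1 hN.le

lemma sameCellVol_Ico_of_cells (hN : 0 < N) (m : ℤ) (n : ℕ) {s t : ℝ}
    (hs : s ∈ Set.Icc (0 : ℝ) 1) (ht : t ∈ Set.Icc (0 : ℝ) 1) :
    sameCellVol N (Set.Ico ((m - s) / N) ((m + n + t) / N)) = (s ^ 2 + n + t ^ 2) / N ^ 2 := by
  have hN' := hN.ne'
  have mul_div_self (x : ℝ) : N * (x / N) = x := mul_div_cancel₀ x hN'
  have div_mono {x y : ℝ} (h : x ≤ y) : x / N ≤ y / N := div_le_div_of_nonneg_right h hN.le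
  obtain ⟨hs0, hs1⟩ := hs
  induction n generalizing t with
  | zero =>
    obtain ⟨ht0, ht1⟩ := ht
    rw [Nat.cast_zero, add_zero, add_zero,
      sameCellVol_Ico_split hN (mul_div_self m) (div_mono (by linarith)) (div_mono (by linarith)),
      sameCellVol_Ico_of_subset_cell hN (m := m - 1) (div_mono (by linarith))
        (by rw [mul_div_self]; push_cast; linarith)
        (by rw [mul_div_self]; push_cast; linarith),
      sameCellVol_Ico_of_subset_cell hN (m := m) (div_mono (by linarith))
        (mul_div_self _).ge (by rw [mul_div_self]; linarith)]
    field_simp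
    ring
  | succ n ih =>
    obtain ⟨ht0, ht1⟩ := ht
    have := n.cast_nonneg (α := ℝ)
    have hgrid : N * ((m + n + 1) / N) = ((m + n + 1 : ℤ) : ℝ) := by
      rw [mul_div_self]
      push_cast
      rfl
    push_cast
    rw [← add_assoc,
      sameCellVol_Ico_split hN hgrid (div_mono (by linarith)) (div_mono (by linarith)),
      ih ⟨zero_le_one, le_rfl⟩, sameCellVol_Ico_of_subset_cell hN (div_mono (by linarith)) hgrid.ge
        (by rw [mul_div_self]; push_cast; linarith)]
    field_simp
    ring

lemma sameCellVol_Ico_of_mem_grid (hN : 0 < N) {m : ℤ} (ha : N * a ≤ m) (hc : m ≤ N * c) :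
    sameCellVol N (Set.Ico a c) =
      (c - a) / N - (fractParabola (N * a) + fractParabola (N * c)) / N ^ 2 := by
  have hs : (⌈N * a⌉ - N * a : ℝ) ∈ Set.Icc (0 : ℝ) 1 :=
    ⟨sub_nonneg.2 (Int.le_ceil _), by linarith [Int.ceil_lt_add_one (N * a)]⟩
  have ht : Int.fract (N * c) ∈ Set.Icc (0 : ℝ) 1 :=
    ⟨Int.fract_nonneg _, (Int.fract_lt_one _).le⟩
  obtain ⟨n, hn⟩ := Int.eq_ofNat_of_zero_le
    (sub_nonneg.2 ((Int.ceil_le.2 ha).trans (Int.le_floor.2 hc)))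
  have hn' : (⌊N * c⌋ - ⌈N * a⌉ : ℝ) = n := by exact_mod_cast hn
  have key := sameCellVol_Ico_of_cells hN ⌈N * a⌉ n hs ht
  have hleft : (⌈N * a⌉ - (⌈N * a⌉ - N * a)) / N = a := by field_simp; ring
  have hright : (⌈N * a⌉ + n + Int.fract (N * c)) / N = c := by
    rw [← hn', add_sub_cancel, Int.floor_add_fract]
    field_simp
  have hfa : fractParabola (N * a) = (⌈N * a⌉ - N * a) * (1 - (⌈N * a⌉ - N * a)) := by
    rw [← fractParabola_of_mem_Icc hs, fractParabola_intCast_sub]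
  rw [hleft, hright] at key
  rw [key, hfa, fractParabola, ← hn', ← Int.self_sub_floor]
  field_simp
  ring

end SameCell

section VolumeVector

lemma floor_pow_mul_eq_of_le {b : ℕ} {x y : ℝ} {i j : ℕ} (hb : 0 < b) (hij : i ≤ j)
    (h : ⌊(b : ℝ) ^ j * x⌋ = ⌊(b : ℝ) ^ j * y⌋) : ⌊(b : ℝ) ^ i * x⌋ = ⌊(b : ℝ) ^ i * y⌋ := by
  obtain ⟨k, rfl⟩ := Nat.exists_eq_add_of_le hij
  have floor_eq_ediv (z : ℝ) :
      ⌊(b : ℝ) ^ i * z⌋ = ⌊(b : ℝ) ^ (i + k) * z⌋ / ((b ^ k : ℕ) : ℤ) := by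
    rw [← Int.floor_div_natCast, Nat.cast_pow, pow_add]
    field_simp
  rw [floor_eq_ediv x, floor_eq_ediv y, h]

lemma exists_floor_pow_mul_ne {b : ℝ} (hb : 1 < b) {x y : ℝ} (hxy : x ≠ y) :
    ∃ i : ℕ, ⌊b ^ i * x⌋ ≠ ⌊b ^ i * y⌋ := by
  have hdist : 0 < |x - y| := abs_pos.2 (sub_ne_zero.2 hxy)
  obtain ⟨i, hi⟩ := pow_unbounded_of_one_lt (1 / |x - y|) hb
  refine ⟨i, fun h => ?_⟩
  have hlt := Int.abs_sub_lt_one_of_floor_eq_floor h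
  rw [← mul_sub, abs_mul, abs_of_nonneg (by positivity)] at hlt
  rw [div_lt_iff₀ hdist] at hi
  exact lt_asymm hi hlt

lemma ne_and_gammaB_eq_iff {b : ℕ} (hb : 2 ≤ b) {x y : ℝ} (hx : x ∈ Set.Ico (0 : ℝ) 1)
    (hy : y ∈ Set.Ico (0 : ℝ) 1) (i : ℕ) :
    x ≠ y ∧ gammaB b x y = i ↔ ⌊(b : ℝ) ^ i * x⌋ = ⌊(b : ℝ) ^ i * y⌋ ∧
      ⌊(b : ℝ) ^ (i + 1) * x⌋ ≠ ⌊(b : ℝ) ^ (i + 1) * y⌋ := by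
  set P : Set ℕ := {i : ℕ | ⌊(b : ℝ) ^ i * x⌋ = ⌊(b : ℝ) ^ i * y⌋ ∧
    ⌊(b : ℝ) ^ (i + 1) * x⌋ ≠ ⌊(b : ℝ) ^ (i + 1) * y⌋}
  have not_lt_of_mem {i j : ℕ} (hi : i ∈ P) (hj : j ∈ P) : ¬ i < j := fun hij =>
    hi.2 (floor_pow_mul_eq_of_le (by lia) hij hj.1)
  have gammaB_eq (hxy : x ≠ y) : gammaB b x y = (sInf P : ℕ) := if_neg hxy
  constructor
  · rintro ⟨hxy, hγ⟩
    have hP : P.Nonempty := by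
      by_contra hempty
      obtain ⟨j, hj⟩ := exists_floor_pow_mul_ne (b := b) (by exact_mod_cast hb) hxy
      refine hj ?_
      clear hj
      induction j with
      | zero =>
        rw [pow_zero, one_mul, one_mul, Int.floor_eq_zero_iff.2 hx, Int.floor_eq_zero_iff.2 hy]
      | succ j ih => exact not_not.1 fun h => hempty ⟨j, ih, h⟩
    rw [gammaB_eq hxy, Nat.cast_inj] at hγ
    exact hγ ▸ Nat.sInf_mem hP
  · intro hi
    have hxy : x ≠ y := by
      rintro rfl
      exact hi.2 rfl
    have hmem : sInf P ∈ P := Nat.sInf_mem ⟨i, hi⟩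
    rw [gammaB_eq hxy, Nat.cast_inj]
    exact ⟨hxy, le_antisymm (not_lt.1 (not_lt_of_mem hi hmem))
      (not_lt.1 (not_lt_of_mem hmem hi))⟩

lemma antitone_sameCellPairs_pow {b : ℕ} (hb : 0 < b) (A : Set ℝ) :
    Antitone fun i => sameCellPairs ((b : ℝ) ^ i) A :=
  fun _ _ hij _ hp => ⟨hp.1, floor_pow_mul_eq_of_le hb hij hp.2⟩

lemma antitone_sameCellVol_pow {b : ℕ} (hb : 0 < b) {A : Set ℝ} (hA : volume A ≠ ⊤) :
    Antitone fun i => sameCellVol ((b : ℝ) ^ i) A := fun _ _ hij =>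
  measureReal_mono (antitone_sameCellPairs_pow hb A hij) (volume_sameCellPairs_ne_top _ hA)

lemma Vvec_self {b : ℕ} (hb : 2 ≤ b) {A : Set ℝ} (hA : MeasurableSet A)
    (hsub : A ⊆ Set.Ico 0 1) (i : ℕ) :
    Vvec b A A i = sameCellVol ((b : ℝ) ^ i) A - sameCellVol ((b : ℝ) ^ (i + 1)) A := by
  have hfin : volume A ≠ ⊤ := measure_ne_top_of_subset hsub measure_Ico_lt_top.ne
  rw [sameCellVol, sameCellVol, ← measureReal_sdiff
    (antitone_sameCellPairs_pow (by lia) A i.le_succ) (measurableSet_sameCellPairs _ hA)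
    (volume_sameCellPairs_ne_top _ hfin), Vvec, measureReal_def]
  congr 2
  ext ⟨x, y⟩
  constructor
  · rintro ⟨hx, hy, hγ⟩
    obtain ⟨heq, hne⟩ := (ne_and_gammaB_eq_iff hb (hsub hx) (hsub hy) i).1 hγ
    exact ⟨⟨⟨hx, hy⟩, heq⟩, fun h => hne h.2⟩
  · rintro ⟨⟨⟨hx, hy⟩, heq⟩, hne⟩
    exact ⟨hx, hy, (ne_and_gammaB_eq_iff hb (hsub hx) (hsub hy) i).2
      ⟨heq, fun h => hne ⟨⟨hx, hy⟩, h⟩⟩⟩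

lemma sameCellVol_pow_Ico_of_le {b i j : ℕ} (hb : 0 < b) (hij : i ≤ j) {a c : ℝ} (hac : a ≤ c)
    {m : ℤ} (ha : m ≤ (b : ℝ) ^ j * a) (hc : (b : ℝ) ^ j * c ≤ m + 1) :
    sameCellVol ((b : ℝ) ^ i) (Set.Ico a c) = (c - a) ^ 2 := by
  have hN : (0 : ℝ) < (b : ℝ) ^ j := by positivity
  rw [sameCellVol_eq_sq fun x hx y hy => floor_pow_mul_eq_of_le hb hij (by
    rw [floor_mul_eq_of_mem_Ico hN ha hc hx, floor_mul_eq_of_mem_Ico hN ha hc hy]),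
    Real.volume_real_Ico_of_le hac]

end VolumeVector

section GeometricExpansion

/-- The probability vector `i ↦ (1 - 1/b) b^(k-i)` on `i ≥ k`: the normalized volume vector of
`1_k × 1_k`, see `Vvec_oneK`. -/
noncomputable def geomVec (b : ℝ) (k i : ℕ) : ℝ :=
  if k ≤ i then (1 - 1 / b) * (b ^ k / b ^ i) else 0

/-- The mean of a unit mass at `d` and `geomVec b (d + 2 + k)`: the normalized volume vector of
`Y_k^{(d)} × Y_k^{(d)}`, see `Vvec_Yint`. -/
noncomputable def splitGeomVec (b : ℝ) (d k i : ℕ) : ℝ :=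
  ((Pi.single d 1 : ℕ → ℝ) i + geomVec b (d + 2 + k) i) / 2

/-- The coefficients of `v` in the basis `geomVec b 0, geomVec b 1, …`. -/
noncomputable def geomCoeff (b : ℝ) (v : ℕ → ℝ) : ℕ → ℝ
  | 0 => b * v 0 / (b - 1)
  | j + 1 => (b * v (j + 1) - v j) / (b - 1)

variable {b : ℝ} {v : ℕ → ℝ}

lemma geomCoeff_nonneg (hb : 1 < b) (h0 : 0 ≤ v 0) (h : ∀ j, v j ≤ b * v (j + 1)) (j : ℕ) :
    0 ≤ geomCoeff b v j := by
  have hb1 : 0 ≤ b - 1 := by linarith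
  cases j with
  | zero => exact div_nonneg (by positivity) hb1
  | succ j => exact div_nonneg (sub_nonneg.2 (h j)) hb1

lemma sum_geomCoeff_mul_pow (hb : 1 < b) (v : ℕ → ℝ) (i : ℕ) :
    ∑ k ∈ Finset.range (i + 1), geomCoeff b v k * b ^ k = b / (b - 1) * (v i * b ^ i) := by
  have hb1 : b - 1 ≠ 0 := by linarith
  induction i with
  | zero =>
    rw [Finset.sum_range_one, geomCoeff]
    ring
  | succ i ih =>
    rw [Finset.sum_range_succ, ih, geomCoeff]
    field_simp
    ring

lemma hasSum_geomCoeff_mul_geomVec (hb : 1 < b) (v : ℕ → ℝ) (i : ℕ) :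
    HasSum (fun k => geomCoeff b v k * geomVec b k i) (v i) := by
  have hb0 : b ≠ 0 := by linarith
  have hb1 : b - 1 ≠ 0 := by linarith
  have hfinite : ∑ k ∈ Finset.range (i + 1), geomCoeff b v k * geomVec b k i = v i := by
    calc ∑ k ∈ Finset.range (i + 1), geomCoeff b v k * geomVec b k i
        = ∑ k ∈ Finset.range (i + 1), geomCoeff b v k * b ^ k * ((1 - 1 / b) / b ^ i) := by
          refine Finset.sum_congr rfl fun k hk => ?_
          rw [geomVec, if_pos (Finset.mem_range_succ_iff.1 hk)]
          ring
      _ = v i := by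
          rw [← Finset.sum_mul, sum_geomCoeff_mul_pow hb]
          field_simp
  rw [← hfinite]
  refine hasSum_sum_of_ne_finset_zero fun k hk => ?_
  rw [geomVec, if_neg (Finset.mem_range_succ_iff.not.1 hk), mul_zero]

lemma hasSum_geomCoeff_nat_add_succ (b : ℝ) {n : ℕ} {s t : ℝ}
    (hs : HasSum (fun k => v (n + 1 + k)) s) (ht : HasSum (fun k => v (n + k)) t) :
    HasSum (fun k => geomCoeff b v (n + 1 + k)) ((b * s - t) / (b - 1)) := by
  simpa only [add_right_comm n 1, geomCoeff] using ((hs.mul_left b).sub ht).div_const (b - 1)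

lemma hasSum_geomCoeff (hb : 1 < b) {s : ℝ} (hv : HasSum v s) : HasSum (geomCoeff b v) s := by
  have hb1 : b - 1 ≠ 0 := by linarith
  have hv1 : HasSum (fun k => v (0 + 1 + k)) (s - v 0) := by
    simpa [add_comm] using (hasSum_nat_add_iff' 1).2 hv
  have htail := hasSum_geomCoeff_nat_add_succ b hv1 (by simpa using hv)
  have hvalue : s - geomCoeff b v 0 = (b * (s - v 0) - s) / (b - 1) := by
    rw [geomCoeff]
    field_simp
    ring
  rw [← hasSum_nat_add_iff' 1, Finset.sum_range_one, hvalue]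
  simpa only [zero_add, add_comm] using htail

lemma hasSum_scale_tail {f : ℕ → ℝ} {s : ℝ} (hf : HasSum f s) (m : ℕ) (l : ℝ) :
    HasSum (fun j => if m ≤ j then (1 - l) * f j else f j) (s - l * ∑' k, f (m + k)) := by
  have htail := (hasSum_nat_add_iff' m).2 hf
  have hhead : ∑ j ∈ Finset.range m, (if m ≤ j then (1 - l) * f j else f j) =
      ∑ j ∈ Finset.range m, f j :=
    Finset.sum_congr rfl fun j hj => if_neg (Finset.mem_range.1 hj).not_ge
  have hvalue : s - l * ∑' k, f (m + k) - ∑ j ∈ Finset.range m, f j =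
      (1 - l) * (s - ∑ j ∈ Finset.range m, f j) := by
    simp only [add_comm m, htail.tsum_eq]
    ring
  rw [← hasSum_nat_add_iff' m, hhead, hvalue]
  simpa only [Nat.le_add_left, if_true] using htail.mul_left (1 - l)

/- The tail of the expansion, scaled by `l`, is traded for the vectors `splitGeomVec b d k`; each of
these carries half of its mass at `d`, so `l` is chosen to make the masses at `d` add up to `e`. -/
lemma exists_splitGeomVec_expansion (hb : 1 < b) {s : ℝ} (hv : HasSum v s)
    (hcoeff : ∀ j, 0 ≤ geomCoeff b v j) (d : ℕ) {e : ℝ} (he : 0 ≤ e)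
    (he_le : e ≤ ∑' k, geomCoeff b v (d + 2 + k)) :
    ∃ α τ : ℕ → ℝ, (∀ k, 0 ≤ α k) ∧ (∀ k, 0 ≤ τ k) ∧ ∑' k, (α k + τ k) = s + e ∧
      ∀ i, v i + (Pi.single d e : ℕ → ℝ) i =
        ∑' k, α k * splitGeomVec b d k i + ∑' k, τ k * geomVec b k i := by
  set q := geomCoeff b v
  have hq : HasSum q s := hasSum_geomCoeff hb hv
  have summable_tail {f : ℕ → ℝ} (hf : Summable f) : Summable fun k => f (d + 2 + k) :=
    hf.comp_injective (add_right_injective (d + 2))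
  obtain ⟨l, hl0, hl1, hl⟩ : ∃ l, 0 ≤ l ∧ l ≤ 1 ∧ l * ∑' k, q (d + 2 + k) = e :=
    ⟨e / ∑' k, q (d + 2 + k), div_nonneg he (he.trans he_le), div_le_one_of_le₀ he_le
      (he.trans he_le), div_mul_cancel_of_imp fun h => le_antisymm (he_le.trans h.le) he⟩
  have hα_sum := (summable_tail hq.summable).hasSum.mul_left (2 * l)
  have hτ_sum := hasSum_scale_tail hq (d + 2) l
  refine ⟨fun k => 2 * l * q (d + 2 + k), fun j => if d + 2 ≤ j then (1 - l) * q j else q j,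
    fun k => mul_nonneg (by positivity) (hcoeff _), fun j => ?_, ?_, fun i => ?_⟩
  · dsimp only
    split_ifs
    exacts [mul_nonneg (sub_nonneg.2 hl1) (hcoeff j), hcoeff j]
  · rw [(hα_sum.add hτ_sum).tsum_eq]
    linear_combination hl
  · have hexp := hasSum_geomCoeff_mul_geomVec hb v i
    have hα := (hα_sum.mul_right ((Pi.single d 1 : ℕ → ℝ) i / 2)).add
      ((summable_tail hexp.summable).hasSum.mul_left l)
    have hτ := hasSum_scale_tail hexp (d + 2) l
    have split_eq (k : ℕ) : 2 * l * q (d + 2 + k) * splitGeomVec b d k i =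
        2 * l * q (d + 2 + k) * ((Pi.single d 1 : ℕ → ℝ) i / 2) +
          l * (q (d + 2 + k) * geomVec b (d + 2 + k) i) := by
      rw [splitGeomVec]
      ring
    have hsingle : (Pi.single d e : ℕ → ℝ) i = e * (Pi.single d 1 : ℕ → ℝ) i := by
      simp only [Pi.single_apply, mul_ite, mul_one, mul_zero]
    simp only [split_eq, ite_mul, mul_assoc (1 - l)]
    rw [hα.tsum_eq, hτ.tsum_eq, hsingle]
    linear_combination -(Pi.single d 1 : ℕ → ℝ) i * hl

lemma geomCoeff_sub_single_nonneg (hb : 1 < b) {d : ℕ} {e : ℝ} (hv : ∀ i, 0 ≤ v i)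
    (hlow : ∀ i < d, v i = 0) (hmono : ∀ i, d < i → v i ≤ b * v (i + 1)) (he_le : e ≤ v d)
    (hdef : v d - b * v (d + 1) ≤ e) (j : ℕ) : 0 ≤ geomCoeff b (v - Pi.single d e) j := by
  have hx (i : ℕ) : 0 ≤ (v - Pi.single d e : ℕ → ℝ) i := by
    rcases eq_or_ne i d with rfl | h
    · simpa using he_le
    · simpa [h] using hv i
  refine geomCoeff_nonneg hb (hx 0) (fun j => ?_) j
  rcases lt_trichotomy j d with h | rfl | h
  · have : (v - Pi.single d e : ℕ → ℝ) j = 0 := by simp [h.ne, hlow j h]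
    rw [this]
    exact mul_nonneg (by linarith) (hx (j + 1))
  · simp only [Pi.sub_apply, Pi.single_eq_same, Pi.single_eq_of_ne j.succ_ne_self, sub_zero]
    linarith
  · have h' : j + 1 ≠ d := by lia
    simp only [Pi.sub_apply, Pi.single_eq_of_ne h.ne', Pi.single_eq_of_ne h', sub_zero]
    exact hmono j h

lemma exists_nonneg_splitGeomVec_expansion (hb : 1 < b) {d : ℕ} {s : ℝ} (hv : HasSum v s)
    (hpos : ∀ i, 0 ≤ v i) (hlow : ∀ i < d, v i = 0) (hmono : ∀ i, d < i → v i ≤ b * v (i + 1))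
    (hdef : v d - b * v (d + 1) ≤ ∑' k, geomCoeff b v (d + 2 + k)) :
    ∃ α τ : ℕ → ℝ, (∀ k, 0 ≤ α k) ∧ (∀ k, 0 ≤ τ k) ∧ ∑' k, (α k + τ k) = s ∧
      ∀ i, v i = ∑' k, α k * splitGeomVec b d k i + ∑' k, τ k * geomVec b k i := by
  set e := max 0 (v d - b * v (d + 1))
  have he_le : e ≤ v d := max_le (hpos d) (sub_le_self _ (mul_nonneg (by linarith) (hpos _)))
  have hcoeff := geomCoeff_sub_single_nonneg hb hpos hlow hmono he_le (le_max_right _ _)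
  have tail_eq (k : ℕ) :
      geomCoeff b (v - Pi.single d e) (d + 2 + k) = geomCoeff b v (d + 2 + k) := by
    have h0 : d + 1 + k ≠ d := by lia
    have h1 : d + 1 + k + 1 ≠ d := by lia
    simp only [show d + 2 + k = d + 1 + k + 1 by lia, geomCoeff, Pi.sub_apply,
      Pi.single_eq_of_ne h0, Pi.single_eq_of_ne h1, sub_zero]
  have he_tail : e ≤ ∑' k, geomCoeff b (v - Pi.single d e) (d + 2 + k) :=
    max_le (tsum_nonneg fun k => hcoeff _) (by simpa only [tail_eq] using hdef)
  simpa only [Pi.sub_apply, sub_add_cancel] using exists_splitGeomVec_expansion hb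
    (hv.sub (hasSum_pi_single d e)) hcoeff d (e := e) (le_max_left _ _) he_tail

lemma hasSum_sub_succ {M : ℕ → ℝ} {l : ℝ} (hM : Filter.Tendsto M Filter.atTop (nhds l))
    (hanti : Antitone M) : HasSum (fun i => M i - M (i + 1)) (M 0 - l) := by
  rw [hasSum_iff_tendsto_nat_of_nonneg fun i => sub_nonneg.2 (hanti i.le_succ)]
  simpa only [Finset.sum_range_sub'] using hM.const_sub (M 0)

end GeometricExpansion

section ElementaryIntervals

lemma oneK_eq_Ico (b k : ℕ) : oneK b k = Set.Ico 0 (1 / (b : ℝ) ^ k) := by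
  rw [oneK, zpow_neg, zpow_natCast, one_div]

lemma Yint_eq_Ico (b k d : ℕ) :
    Yint b k d = Set.Ico (1 / (b : ℝ) ^ (d + 1) - 1 / (b : ℝ) ^ (d + 2 + k))
      (1 / (b : ℝ) ^ (d + 1) + 1 / (b : ℝ) ^ (d + 2 + k)) := by
  rw [Yint, show -((d : ℤ) + 1) = -((d + 1 : ℕ) : ℤ) by push_cast; ring,
    show -((2 : ℤ) + k + d) = -((d + 2 + k : ℕ) : ℤ) by push_cast; ring]
  simp only [zpow_neg, zpow_natCast, one_div]

lemma oneK_subset_Ico {b : ℕ} (hb : 0 < b) (k : ℕ) : oneK b k ⊆ Set.Ico 0 1 := by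
  rw [oneK_eq_Ico]
  exact Set.Ico_subset_Ico_right
    ((div_le_one (by positivity)).2 (one_le_pow₀ (by exact_mod_cast hb)))

lemma sameCellVol_pow_oneK {b : ℕ} (hb : 0 < b) (k i : ℕ) :
    sameCellVol ((b : ℝ) ^ i) (oneK b k) = 1 / ((b : ℝ) ^ k * (b : ℝ) ^ max i k) := by
  have hb0 : (b : ℝ) ≠ 0 := by positivity
  have hlen : (0 : ℝ) ≤ 1 / (b : ℝ) ^ k := by positivity
  rw [oneK_eq_Ico]
  rcases le_total i k with h | h
  · rw [sameCellVol_pow_Ico_of_le hb h hlen (m := 0) (by simp) (by simp [hb0]), max_eq_right h]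
    ring
  · obtain ⟨j, rfl⟩ := Nat.exists_eq_add_of_le h
    have hend : (b : ℝ) ^ (k + j) * (1 / (b : ℝ) ^ k) = ((b ^ j : ℕ) : ℤ) + 0 := by
      rw [pow_add]
      push_cast
      field_simp
      ring
    rw [sameCellVol_Ico_of_mem_grid (by positivity) (m := 0) (by simp) (hend ▸ by simp), hend,
      fractParabola_intCast_add, mul_zero, fractParabola_zero, max_eq_left h]
    field_simp
    ring

lemma sameCellVol_Ico_sub_add {N : ℝ} (hN : 0 < N) {p w : ℝ} {m : ℤ} (hp : N * p = m)
    (hw : 0 ≤ w) :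
    sameCellVol N (Set.Ico (p - w) (p + w)) = 2 * sameCellVol N (Set.Ico 0 w) := by
  have hNw : 0 ≤ N * w := mul_nonneg hN.le hw
  rw [sameCellVol_Ico_of_mem_grid hN (m := m) (by rw [mul_sub, hp]; linarith)
      (by rw [mul_add, hp]; linarith),
    sameCellVol_Ico_of_mem_grid hN (m := 0) (by simp) (by simpa using hNw), mul_sub, mul_add, hp,
    fractParabola_intCast_sub, fractParabola_intCast_add, mul_zero, fractParabola_zero]
  ring

lemma Yint_subset_cell {b : ℕ} (hb : 2 ≤ b) (k d : ℕ) :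
    0 ≤ (b : ℝ) ^ d * (1 / (b : ℝ) ^ (d + 1) - 1 / (b : ℝ) ^ (d + 2 + k)) ∧
      (b : ℝ) ^ d * (1 / (b : ℝ) ^ (d + 1) + 1 / (b : ℝ) ^ (d + 2 + k)) ≤ 1 := by
  have hb' : (2 : ℝ) ≤ b := by exact_mod_cast hb
  have hle : (b : ℝ) ≤ b ^ (2 + k) := le_self_pow₀ (by linarith) (by lia)
  have hhalf : 1 / (b : ℝ) ≤ 1 / 2 := one_div_le_one_div_of_le two_pos hb'
  have hwidth : 1 / (b : ℝ) ^ (2 + k) ≤ 1 / b := one_div_le_one_div_of_le (by positivity) hle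
  have hcenter_eq : (b : ℝ) ^ d * (1 / (b : ℝ) ^ (d + 1)) = 1 / b := by
    rw [pow_succ]
    field_simp
  have hwidth_eq : (b : ℝ) ^ d * (1 / (b : ℝ) ^ (d + 2 + k)) = 1 / b ^ (2 + k) := by
    rw [add_assoc, pow_add _ d]
    field_simp
  rw [mul_sub, mul_add, hcenter_eq, hwidth_eq]
  constructor <;> linarith

lemma sameCellVol_pow_Yint_of_le {b : ℕ} (hb : 2 ≤ b) (k : ℕ) {d i : ℕ} (hi : i ≤ d) :
    sameCellVol ((b : ℝ) ^ i) (Yint b k d) = 4 / ((b : ℝ) ^ (d + 2 + k)) ^ 2 := by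
  have hw : (0 : ℝ) ≤ 1 / (b : ℝ) ^ (d + 2 + k) := by positivity
  obtain ⟨hleft, hright⟩ := Yint_subset_cell hb k d
  rw [Yint_eq_Ico, sameCellVol_pow_Ico_of_le (by lia) hi (by linarith) (m := 0)
    (by simpa using hleft) (by simpa using hright)]
  ring

lemma sameCellVol_pow_Yint_of_lt {b : ℕ} (hb : 0 < b) (k : ℕ) {d i : ℕ} (hi : d < i) :
    sameCellVol ((b : ℝ) ^ i) (Yint b k d) =
      2 * sameCellVol ((b : ℝ) ^ i) (oneK b (d + 2 + k)) := by
  obtain ⟨j, rfl⟩ := Nat.exists_eq_add_of_le (Nat.succ_le_of_lt hi)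
  rw [Yint_eq_Ico, oneK_eq_Ico]
  refine sameCellVol_Ico_sub_add (by positivity) (m := (b ^ j : ℕ)) ?_ (by positivity)
  rw [Nat.succ_eq_add_one, pow_add]
  push_cast
  field_simp

lemma Vvec_oneK {b : ℕ} (hb : 2 ≤ b) (k i : ℕ) :
    (b : ℝ) ^ (2 * k) * Vvec b (oneK b k) (oneK b k) i = geomVec b k i := by
  have hb0 : (b : ℝ) ≠ 0 := by positivity
  rw [Vvec_self hb (A := oneK b k) measurableSet_Ico (oneK_subset_Ico (by lia) k),
    sameCellVol_pow_oneK (by lia), sameCellVol_pow_oneK (by lia), geomVec]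
  split_ifs with h
  · rw [max_eq_left h, max_eq_left (by lia), pow_succ, pow_mul']
    field_simp
  · rw [max_eq_right (by lia), max_eq_right (by lia), sub_self, mul_zero]

lemma Yint_subset_Ico {b : ℕ} (hb : 2 ≤ b) (k d : ℕ) : Yint b k d ⊆ Set.Ico 0 1 := by
  have hpos : (0 : ℝ) < (b : ℝ) ^ d := by positivity
  have hone : (1 : ℝ) ≤ (b : ℝ) ^ d := one_le_pow₀ (by exact_mod_cast (by lia : 1 ≤ b))
  obtain ⟨hleft, hright⟩ := Yint_subset_cell hb k d
  rw [Yint_eq_Ico]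
  exact Set.Ico_subset_Ico (nonneg_of_mul_nonneg_right hleft hpos)
    (le_of_mul_le_mul_left (by linarith) hpos)

lemma Vvec_Yint {b : ℕ} (hb : 2 ≤ b) (k d i : ℕ) :
    (b : ℝ) ^ (2 * (d + 2 + k)) / 4 * Vvec b (Yint b k d) (Yint b k d) i =
      splitGeomVec b d k i := by
  rw [Vvec_self hb (A := Yint b k d) measurableSet_Ico (Yint_subset_Ico hb k d), splitGeomVec]
  rcases lt_trichotomy i d with h | rfl | h
  · rw [sameCellVol_pow_Yint_of_le hb k h.le, sameCellVol_pow_Yint_of_le hb k h,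
      Pi.single_eq_of_ne h.ne, geomVec, if_neg (by lia)]
    ring
  · rw [sameCellVol_pow_Yint_of_le hb k le_rfl,
      sameCellVol_pow_Yint_of_lt (by lia) k i.lt_succ_self, sameCellVol_pow_oneK (by lia),
      max_eq_right (by lia), Pi.single_eq_same, geomVec,
      if_neg (by lia), pow_mul']
    field_simp
    ring
  · rw [sameCellVol_pow_Yint_of_lt (by lia) k h, sameCellVol_pow_Yint_of_lt (by lia) k (by lia),
      Pi.single_eq_of_ne h.ne', ← Vvec_oneK hb,
      Vvec_self hb (A := oneK b (d + 2 + k)) measurableSet_Ico (oneK_subset_Ico (by lia) _)]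
    ring

end ElementaryIntervals

section GridPoint

variable {b j : ℕ} {a c : ℝ} {m : ℤ}

lemma sameCellVol_pow_Ico_of_ge (hb : 0 < b) (ha : (b : ℝ) ^ j * a ≤ m)
    (hc : m ≤ (b : ℝ) ^ j * c) {i : ℕ} (hi : j ≤ i) :
    sameCellVol ((b : ℝ) ^ i) (Set.Ico a c) = (c - a) / (b : ℝ) ^ i -
      (fractParabola ((b : ℝ) ^ i * a) + fractParabola ((b : ℝ) ^ i * c)) / ((b : ℝ) ^ i) ^ 2 := by
  obtain ⟨k, rfl⟩ := Nat.exists_eq_add_of_le' hi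
  have hk : (0 : ℝ) ≤ (b : ℝ) ^ k := by positivity
  refine sameCellVol_Ico_of_mem_grid (by positivity) (m := (b ^ k : ℕ) * m) ?_ ?_
  · rw [pow_add, mul_assoc]
    push_cast
    exact mul_le_mul_of_nonneg_left ha hk
  · rw [pow_add, mul_assoc]
    push_cast
    exact mul_le_mul_of_nonneg_left hc hk

lemma tendsto_sameCellVol_pow_Ico (hb : 1 < b) (ha : (b : ℝ) ^ j * a ≤ m)
    (hc : m ≤ (b : ℝ) ^ j * c) :
    Filter.Tendsto (fun i => sameCellVol ((b : ℝ) ^ i) (Set.Ico a c)) Filter.atTop (nhds 0) := by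
  have hlim : Filter.Tendsto (fun i : ℕ => (c - a) / (b : ℝ) ^ i) Filter.atTop (nhds 0) :=
    (tendsto_pow_atTop_atTop_of_one_lt (by exact_mod_cast hb)).const_div_atTop (c - a)
  refine squeeze_zero' (.of_forall fun _ => measureReal_nonneg) ?_ hlim
  filter_upwards [Filter.eventually_ge_atTop j] with i hi
  rw [sameCellVol_pow_Ico_of_ge (by lia) ha hc hi]
  exact sub_le_self _ (div_nonneg (add_nonneg (fractParabola_nonneg _) (fractParabola_nonneg _))
    (sq_nonneg _))

lemma sameCellVol_pow_add_mul_le (hb : 0 < b) (ha : (b : ℝ) ^ j * a ≤ m)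
    (hc : m ≤ (b : ℝ) ^ j * c) {i : ℕ} (hi : j ≤ i) :
    sameCellVol ((b : ℝ) ^ i) (Set.Ico a c) + b * sameCellVol ((b : ℝ) ^ (i + 2)) (Set.Ico a c) ≤
      (b + 1) * sameCellVol ((b : ℝ) ^ (i + 1)) (Set.Ico a c) := by
  have hvol {n : ℕ} := sameCellVol_pow_Ico_of_ge hb ha hc (i := n)
  rw [hvol hi, hvol (by lia), hvol (by lia)]
  have pow_one_mul (x : ℝ) : (b : ℝ) ^ (i + 1) * x = b * (b ^ i * x) := by ring
  have pow_two_mul (x : ℝ) : (b : ℝ) ^ (i + 2) * x = b * (b * (b ^ i * x)) := by ring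
  have hendpoints := add_le_add (sq_add_mul_fractParabola_le hb ((b : ℝ) ^ i * a))
    (sq_add_mul_fractParabola_le hb ((b : ℝ) ^ i * c))
  simp only [pow_one_mul, pow_two_mul]
  rw [pow_succ _ i, pow_add _ i 2]
  have hpos : (0 : ℝ) < b ^ 3 * ((b : ℝ) ^ i) ^ 2 := by positivity
  rw [← sub_nonneg] at hendpoints ⊢
  refine (div_nonneg hendpoints hpos.le).trans_eq ?_
  field_simp
  ring

lemma hasSum_Vvec_Ico_nat_add (hb : 2 ≤ b) (hsub : Set.Ico a c ⊆ Set.Ico 0 1)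
    (ha : (b : ℝ) ^ j * a ≤ m) (hc : m ≤ (b : ℝ) ^ j * c) (n : ℕ) :
    HasSum (fun k => Vvec b (Set.Ico a c) (Set.Ico a c) (n + k))
      (sameCellVol ((b : ℝ) ^ n) (Set.Ico a c)) := by
  have hanti := antitone_sameCellVol_pow (b := b) (by lia) (A := Set.Ico a c)
    measure_Ico_lt_top.ne
  have htail := hasSum_sub_succ ((Filter.tendsto_add_atTop_iff_nat n).2
    (tendsto_sameCellVol_pow_Ico (by lia) ha hc)) fun k l hkl => hanti (Nat.add_le_add_right hkl n)
  simpa only [Vvec_self hb measurableSet_Ico hsub, add_comm n, add_right_comm _ 1,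
    zero_add, sub_zero] using htail

end GridPoint

namespace IsRep

variable {b d : ℕ} {a c : ℝ}

lemma exists_pow_mul_eq (hb : 0 < b) (hac : a < c) (hrep : IsRep b (Set.Ico a c) (d + 1)) :
    ∃ (h g n : ℕ) (s t : ℝ), 1 ≤ g ∧ g + n + 1 ≤ b ∧ s ∈ Set.Ico (0 : ℝ) 1 ∧
      t ∈ Set.Ico (0 : ℝ) 1 ∧ (b : ℝ) ^ (d + 1) * a = h * b + g - s ∧
      (b : ℝ) ^ (d + 1) * c = h * b + g + n + t := by
  obtain ⟨h, g, G, z, Z, hg, hgG, hG, hz0, hz1, hZ0, hZ1, hIco⟩ := hrep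
  obtain ⟨n, rfl⟩ := Nat.exists_eq_add_of_le hgG
  obtain ⟨rfl, rfl⟩ := (Set.Ico_eq_Ico_iff (Or.inl hac)).1 hIco
  have hb0 : (b : ℝ) ≠ 0 := by positivity
  have hN : (0 : ℝ) < (b : ℝ) ^ (d + 1) := by positivity
  have hunit : (b : ℝ) ^ (-((d + 1 : ℕ) : ℤ)) = 1 / (b : ℝ) ^ (d + 1) := by
    rw [zpow_neg, zpow_natCast, one_div]
  have hcell : (b : ℝ) ^ (1 - ((d + 1 : ℕ) : ℤ)) = b / (b : ℝ) ^ (d + 1) := by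
    rw [zpow_sub₀ hb0, zpow_natCast, zpow_one]
  rw [hunit, lt_div_iff₀' hN] at hz1 hZ1
  refine ⟨h, g, n, (b : ℝ) ^ (d + 1) * z, (b : ℝ) ^ (d + 1) * Z, hg, hG,
    ⟨by positivity, hz1⟩, ⟨by positivity, hZ1⟩, ?_, ?_⟩
  · rw [hunit, hcell]
    field_simp
  · rw [hunit, hcell]
    push_cast
    field_simp
    ring

lemma exists_cell (hb : 0 < b) (hac : a < c) (hrep : IsRep b (Set.Ico a c) (d + 1)) :
    ∃ m : ℤ, m ≤ (b : ℝ) ^ d * a ∧ (b : ℝ) ^ d * c ≤ m + 1 := by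
  obtain ⟨h, g, n, s, t, hg, hn, hs, ht, ha, hc⟩ := hrep.exists_pow_mul_eq hb hac
  have hb0 : (0 : ℝ) < b := by exact_mod_cast hb
  have hg' : (1 : ℝ) ≤ g := by exact_mod_cast hg
  have hn' : (g : ℝ) + n + 1 ≤ b := by exact_mod_cast hn
  refine ⟨h, le_of_mul_le_mul_left ?_ hb0, le_of_mul_le_mul_left ?_ hb0⟩
  · rw [← mul_assoc, ← pow_succ', ha, Int.cast_natCast]
    linarith [hs.2]
  · rw [← mul_assoc, ← pow_succ', hc, Int.cast_natCast]
    linarith [ht.2]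

lemma exists_grid_point (hb : 0 < b) (hac : a < c) (hrep : IsRep b (Set.Ico a c) (d + 1)) :
    ∃ m : ℤ, (b : ℝ) ^ (d + 1) * a ≤ m ∧ m ≤ (b : ℝ) ^ (d + 1) * c := by
  obtain ⟨h, g, n, s, t, -, -, hs, ht, ha, hc⟩ := hrep.exists_pow_mul_eq hb hac
  refine ⟨h * b + g, ?_, ?_⟩
  · rw [ha]
    push_cast
    linarith [hs.1]
  · rw [hc]
    push_cast
    linarith [ht.1, n.cast_nonneg (α := ℝ)]

lemma mul_sq_length_le (hb : 0 < b) (hac : a < c) (hrep : IsRep b (Set.Ico a c) (d + 1)) :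
    (b - 1) * (c - a) ^ 2 ≤
      (b ^ 2 - 2) * sameCellVol ((b : ℝ) ^ (d + 1)) (Set.Ico a c) -
        b * (b - 2) * sameCellVol ((b : ℝ) ^ (d + 2)) (Set.Ico a c) := by
  obtain ⟨m, hma, hmc⟩ := hrep.exists_grid_point hb hac
  obtain ⟨h, g, n, s, t, hg, hn, hs, ht, ha, hc⟩ := hrep.exists_pow_mul_eq hb hac
  have hvol {i : ℕ} := sameCellVol_pow_Ico_of_ge hb hma hmc (i := i)
  have hlen := length_mul_sub_le (b := b) (n := n) (by lia) (Set.Ico_subset_Icc_self hs)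
    (Set.Ico_subset_Icc_self ht)
  have fP_a : fractParabola ((b : ℝ) ^ (d + 1) * a) = fractParabola s := by
    rw [ha, ← fractParabola_intCast_sub (h * b + g) s]
    push_cast
    rfl
  have fP_c : fractParabola ((b : ℝ) ^ (d + 1) * c) = fractParabola t := by
    rw [hc, ← fractParabola_intCast_add (h * b + g + n) t]
    push_cast
    rfl
  have fP_ba : fractParabola ((b : ℝ) ^ (d + 2) * a) = fractParabola (b * s) := by
    rw [pow_succ' _ (d + 1), mul_assoc, ha, ← fractParabola_intCast_sub (b * (h * b + g)) (b * s)]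
    push_cast
    ring_nf
  have fP_bc : fractParabola ((b : ℝ) ^ (d + 2) * c) = fractParabola (b * t) := by
    rw [pow_succ' _ (d + 1), mul_assoc, hc,
      ← fractParabola_intCast_add (b * (h * b + g + n)) (b * t)]
    push_cast
    ring_nf
  have hst : s + n + t = (b : ℝ) ^ (d + 1) * (c - a) := by linear_combination ha - hc
  have hpos : (0 : ℝ) < b * ((b : ℝ) ^ (d + 1)) ^ 2 := by positivity
  rw [hvol le_rfl, hvol (by lia), fP_a, fP_c, fP_ba, fP_bc, pow_succ' _ (d + 1)]
  rw [hst, ← sub_nonneg] at hlen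
  rw [← sub_nonneg]
  refine (div_nonneg hlen hpos.le).trans_eq ?_
  field_simp
  ring

lemma exists_expansion (hb : 2 ≤ b) (hac : a < c) (hsub : Set.Ico a c ⊆ Set.Ico 0 1)
    (hrep : IsRep b (Set.Ico a c) (d + 1)) :
    ∃ α τ : ℕ → ℝ, (∀ k, 0 ≤ α k) ∧ (∀ k, 0 ≤ τ k) ∧ ∑' k, (α k + τ k) = (c - a) ^ 2 ∧
      ∀ i, Vvec b (Set.Ico a c) (Set.Ico a c) i =
        ∑' k, α k * splitGeomVec b d k i + ∑' k, τ k * geomVec b k i := by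
  have hb1 : (1 : ℝ) < b := by exact_mod_cast hb
  obtain ⟨p, hpa, hpc⟩ := hrep.exists_cell (by lia) hac
  obtain ⟨m, hma, hmc⟩ := hrep.exists_grid_point (by lia) hac
  have hvol {i : ℕ} (hi : i ≤ d) : sameCellVol ((b : ℝ) ^ i) (Set.Ico a c) = (c - a) ^ 2 :=
    sameCellVol_pow_Ico_of_le (by lia) hi hac.le hpa hpc
  have hV := Vvec_self hb measurableSet_Ico hsub
  have hsum := hasSum_Vvec_Ico_nat_add hb hsub hma hmc
  have htotal : HasSum (Vvec b (Set.Ico a c) (Set.Ico a c)) ((c - a) ^ 2) := by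
    simpa only [zero_add, hvol d.zero_le] using hsum 0
  refine exists_nonneg_splitGeomVec_expansion hb1 htotal (fun _ => ENNReal.toReal_nonneg)
    (fun i hi => ?_) (fun i hi => ?_) ?_
  · rw [hV, hvol hi.le, hvol hi, sub_self]
  · rw [hV, hV]
    linarith [sameCellVol_pow_add_mul_le (by lia) hma hmc hi]
  · have htail := hasSum_geomCoeff_nat_add_succ b (hsum (d + 1 + 1)) (hsum (d + 1))
    rw [htail.tsum_eq, le_div_iff₀ (sub_pos.2 hb1), hV, hV, hvol le_rfl]
    linarith [hrep.mul_sq_length_le (by lia) hac]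

end IsRep

/-- Decomposition of the volume vector of `A × A`, for a half-open interval `A ⊆ [0,1)`:
with `r` the smallest positive integer admitting the representation (and `r = 1` when
`A = [0,1)`), there are nonnegative `(α_k)`, `(τ_k)` with `Σ_k (α_k + τ_k) = Vol(A × A)`
(the square of the length of `A`) and, for every `i`,
`V_i(A×A) = Σ_k α_k (b^{2(k+r+1)}/4) V_i(Y_k^{(r−1)} × Y_k^{(r−1)}) + Σ_k τ_k b^{2k} V_i(1_k × 1_k)`. -/
theorem claim_decompA (b : ℕ) (hb : 2 ≤ b) (A : Set ℝ) (a c : ℝ)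
    (hA : A = Set.Ico a c) (hac : a < c) (hsub : A ⊆ Set.Ico (0 : ℝ) 1)
    (r : ℕ)
    (hr1 : A = Set.Ico (0 : ℝ) 1 → r = 1)
    (hr2 : A ≠ Set.Ico (0 : ℝ) 1 →
      1 ≤ r ∧ IsRep b A r ∧ ∀ r', 1 ≤ r' → IsRep b A r' → r ≤ r') :
    ∃ α τ : ℕ → ℝ, (∀ k, 0 ≤ α k) ∧ (∀ k, 0 ≤ τ k) ∧
      (∑' k : ℕ, (α k + τ k)) = (c - a) ^ 2 ∧
      ∀ i : ℕ, Vvec b A A i =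
        (∑' k : ℕ, α k * ((b : ℝ) ^ (2 * (k + r + 1)) / 4) *
          Vvec b (Yint b k (r - 1)) (Yint b k (r - 1)) i) +
        (∑' k : ℕ, τ k * (b : ℝ) ^ (2 * k) * Vvec b (oneK b k) (oneK b k) i) := by
  subst hA
  by_cases hfull : Set.Ico a c = Set.Ico (0 : ℝ) 1
  · have hone : oneK b 0 = Set.Ico (0 : ℝ) 1 := by simp [oneK]
    obtain ⟨rfl, rfl⟩ := (Set.Ico_eq_Ico_iff (Or.inl hac)).1 hfull
    have hsingle : (0 : ℕ → ℝ) ≤ Pi.single 0 1 := Pi.single_nonneg.2 zero_le_one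
    refine ⟨0, Pi.single 0 1, fun _ => le_rfl, hsingle, ?_, fun i => ?_⟩
    · simp
    · rw [tsum_eq_single 0 (by simp), tsum_eq_single 0 (by simp +contextual), hone]
      simp
  · obtain ⟨hr, hrep, -⟩ := hr2 hfull
    obtain ⟨d, rfl⟩ := Nat.exists_eq_add_of_le' hr
    obtain ⟨α, τ, hα, hτ, hsum, hexp⟩ := hrep.exists_expansion hb hac hsub
    refine ⟨α, τ, hα, hτ, hsum, fun i => ?_⟩
    simp only [hexp i, ← Vvec_Yint hb, ← Vvec_oneK hb, Nat.add_sub_cancel, mul_assoc,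
      show ∀ k, k + (d + 1) + 1 = d + 2 + k by lia]
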